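/- arXiv:2203.06171 — 2 statements merged into one kernel-verified Lean document; each statement's English description precedes it below -/
import Mathlib

section
/- In any 8-schedule σ of the RAI instance I', for each j∈[n] exactly one of the following two possibilities holds: (1) TMach(j,0) receives exactly the jobs {VJob(j,0,⊤), VJob(j,1,⊤)} together with its private load, and TMach(j,1) receives exactly {VJob(j,2,⊥), VJob(j,3,⊥), TJob(j)} together with its private load; or (2) TMach(j,0) receives exactly {VJob(j,0,⊥), VJob(j,1,⊥), TJob(j)} together with its private load, and TMach(j,1) receives exactly {VJob(j,2,⊤), VJob(j,3,⊤)} together with its private load. -/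
/-!
Group the machines `TMach(j,q)`, `BGMach(j,2q)`, `BGMach(j,2q+1)` into the stage `2j+q`, and say
that the jobs `VJob(j,t,∘)` originate from stage `2j+⌊t/2⌋`. Eligibility only allows a `VJob` to
be placed on a stage at least as large as the one it originates from (among the `2n` stages).

A truth machine has load at most 4 from its private load and a `TJob`, so it needs at least two
`VJob`s (`two_le_card_truth`); a backward gateway machine can hold at most one `GJob`, so it needs
at least one `VJob` (`exists_vjob_gateway`). Hence each stage holds at least four `VJob`s, while
exactly four originate from it. Induction on the stage shows that every stage holds precisely its
own four `VJob`s (`stage_eq_iff`).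

The jobs on `TMach(j,q)` are therefore the private load and some of `TJob(j)`,
`VJob(j,2q,∘)`, `VJob(j,2q+1,∘)`, and the equation `2a + 3b + 2c = 6` with `a ≤ 1`, `b, c ≤ 2`
leaves only the two listed contents (`truth_content`), distinguished by the presence of `TJob(j)`.
-/

open Finset

/-- A 3-SAT* instance: `n` variables, `2m` clauses of 3 literals each
(the first `m` are 1-in-3-clauses, the last `m` are 2-in-3-clauses).
`lit i s` is the literal at position `s` of clause `i`, given as a pair
(variable, polarity). The occurrence bijection `occ` maps the pair `(j,t)`
(the `t`-th occurrence of variable `x_j`, positive for `t = 0,1`, negative for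
`t = 2,3`) to the corresponding (clause, position) pair; `occ_spec` says the
literal there is indeed `x_j` with the right polarity. Bijectivity of `occ`
encodes that every literal occurs exactly twice (and forces `6m = 4n`). -/
structure SAT3Star where
  n : ℕ
  m : ℕ
  lit : Fin (2 * m) → Fin 3 → Fin n × Bool
  occ : (Fin n × Fin 4) ≃ (Fin (2 * m) × Fin 3)
  occ_spec : ∀ jt : Fin n × Fin 4,
    lit (occ jt).1 (occ jt).2 = (jt.1, decide ((jt.2 : ℕ) < 2))

/-- `α` satisfies the 3-SAT* instance: every `k`-in-3-clause has exactly `k`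
true literals. -/
def SAT3Star.Satisfies (S : SAT3Star) (α : Fin S.n → Bool) : Prop :=
  ∀ i : Fin (2 * S.m),
    (Finset.univ.filter (fun s : Fin 3 => α (S.lit i s).1 = (S.lit i s).2)).card =
      if (i : ℕ) < S.m then 1 else 2

/-- `⌊t/2⌋` as an element of `Fin 2`. -/
def half (t : Fin 4) : Fin 2 := ⟨(t : ℕ) / 2, by have := t.isLt; omega⟩

/-- Data of the bubble-sort process used in the reduction: `k` is the number of
transpositions, `φ ℓ p` is the position of the pair `p = (j,t)` in the sequence `φ_ℓ`
(each `φ ℓ` is a bijection onto `{0,…,4n-1}`), `φ 0` is the lexicographic order,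
`φ k` is the order induced by the lexicographic order of `κ(j,t)`, and consecutive
sequences differ by one adjacent transposition swapping `big ℓ` (which moves right; this
is `ξ(ℓ)`) with `small ℓ`; each swapped pair is an inversion with respect to the
lexicographic order of `κ`. -/
structure BubbleData (S : SAT3Star) where
  k : ℕ
  φ : Fin (k + 1) → (Fin S.n × Fin 4) → ℕ
  φ_lt : ∀ ℓ p, φ ℓ p < 4 * S.n
  φ_inj : ∀ ℓ, Function.Injective (φ ℓ)
  φ_zero : ∀ p : Fin S.n × Fin 4, φ 0 p = 4 * (p.1 : ℕ) + (p.2 : ℕ)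
  φ_last : ∀ p : Fin S.n × Fin 4,
    φ (Fin.last k) p = 3 * ((S.occ p).1 : ℕ) + ((S.occ p).2 : ℕ)
  big : Fin k → Fin S.n × Fin 4
  small : Fin k → Fin S.n × Fin 4
  step_adj : ∀ ℓ, φ ℓ.castSucc (small ℓ) = φ ℓ.castSucc (big ℓ) + 1
  step_big : ∀ ℓ, φ ℓ.succ (big ℓ) = φ ℓ.castSucc (big ℓ) + 1
  step_small : ∀ ℓ, φ ℓ.succ (small ℓ) = φ ℓ.castSucc (big ℓ)
  step_other : ∀ ℓ p, p ≠ big ℓ → p ≠ small ℓ → φ ℓ.succ p = φ ℓ.castSucc p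
  step_inv : ∀ ℓ, ((S.occ (small ℓ)).1 : ℕ) < ((S.occ (big ℓ)).1 : ℕ) ∨
    ((S.occ (small ℓ)).1 = (S.occ (big ℓ)).1 ∧
      ((S.occ (small ℓ)).2 : ℕ) < ((S.occ (big ℓ)).2 : ℕ))

/-- The machines of the RAI instance I'. -/
inductive IMach (n m k : ℕ) where
  | TMach : Fin n → Fin 2 → IMach n m k
  | BGMach : Fin n → Fin 4 → IMach n m k
  | FGMach : Fin n → Fin 4 → IMach n m k
  | BSMach : Fin k → Fin n → Fin 4 → IMach n m k
  | FSMach : Fin k → Fin n → Fin 4 → IMach n m k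
  | CMach : Fin (2 * m) → Fin 3 → IMach n m k
  deriving DecidableEq, Fintype

/-- The jobs of the RAI instance I'; `PJob M` is the private load of machine `M`
(of size 0 on the machines that carry no private load). -/
inductive IJob (n m k : ℕ) where
  | TJob : Fin n → IJob n m k
  | VJob : Fin n → Fin 4 → Bool → IJob n m k
  | GJob : Fin n → Fin 4 → Bool → IJob n m k
  | BJob : Fin (k + 1) → Fin n → Fin 4 → Bool → IJob n m k
  | SJob : Fin k → Fin n → Fin 4 → Bool → IJob n m k
  | CJob : Fin (2 * m) → Fin 3 → IJob n m k
  | PJob : IMach n m k → IJob n m k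
  deriving DecidableEq, Fintype

variable (S : SAT3Star) (B : BubbleData S)

/-- Position of a machine in the left-to-right order of I'. -/
def mpos : IMach S.n S.m B.k → ℕ
  | .TMach j q => 2 * (j : ℕ) + (q : ℕ)
  | .BGMach j t => 2 * S.n + (4 * S.n - 1 - (4 * (j : ℕ) + (t : ℕ)))
  | .FGMach j t => 6 * S.n + (4 * (j : ℕ) + (t : ℕ))
  | .BSMach ℓ j t =>
      10 * S.n + 8 * S.n * (ℓ : ℕ) + (4 * S.n - 1 - B.φ ℓ.castSucc (j, t))
  | .FSMach ℓ j t => 10 * S.n + 8 * S.n * (ℓ : ℕ) + 4 * S.n + B.φ ℓ.succ (j, t)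
  | .CMach i s => 10 * S.n + 8 * S.n * B.k + (6 * S.m - 1 - (3 * (i : ℕ) + (s : ℕ)))

/-- Size of the private load of a machine (0 where there is none). -/
def psize : IMach S.n S.m B.k → ℕ
  | .TMach _ _ => 2
  | .BGMach _ _ => 1
  | .FGMach _ _ => 2
  | .BSMach ℓ j t => if (j, t) = B.big ℓ then 3 else 0
  | .FSMach ℓ j t => if (j, t) = B.big ℓ then 3 else 0
  | .CMach _ _ => 0

/-- Sizes of the jobs of I'. -/
def jsize : IJob S.n S.m B.k → ℕ
  | .TJob _ => 2
  | .VJob _ _ b => if b then 3 else 2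
  | .GJob _ _ b => if b then 4 else 5
  | .BJob _ _ _ b => if b then 2 else 1
  | .SJob ℓ j t b =>
      if (j, t) = B.big ℓ then (if b then 3 else 4) else (if b then 6 else 7)
  | .CJob i s =>
      if (s : ℕ) = 0 then 6
      else if (s : ℕ) = 1 then 7
      else if (i : ℕ) < S.m then 7 else 6
  | .PJob M => psize S B M

/-- The first (left-most) eligible machine of a job. -/
def firstM : IJob S.n S.m B.k → IMach S.n S.m B.k
  | .TJob j => .TMach j 0
  | .VJob j t _ => .TMach j ⟨(t : ℕ) / 2, by have := t.isLt; omega⟩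
  | .GJob j t _ => .BGMach j t
  | .BJob ℓ j t _ =>
      if h : (ℓ : ℕ) = 0 then .FGMach j t
      else .FSMach ⟨(ℓ : ℕ) - 1, by have := ℓ.isLt; omega⟩ j t
  | .SJob ℓ j t _ => .BSMach ℓ j t
  | .CJob i _ => .CMach i 2
  | .PJob M => M

/-- The last (right-most) eligible machine of a job. -/
def lastM : IJob S.n S.m B.k → IMach S.n S.m B.k
  | .TJob j => .TMach j 1
  | .VJob j t _ => .BGMach j t
  | .GJob j t _ => .FGMach j t
  | .BJob ℓ j t _ =>
      if h : (ℓ : ℕ) < B.k then .BSMach ⟨(ℓ : ℕ), h⟩ j t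
      else .CMach (S.occ (j, t)).1 (S.occ (j, t)).2
  | .SJob ℓ j t _ => .FSMach ℓ j t
  | .CJob i _ => .CMach i 0
  | .PJob M => M

/-- A job is eligible exactly on the machines lying (in the machine order) between its
first and its last eligible machine. -/
def ielig (job : IJob S.n S.m B.k) (M : IMach S.n S.m B.k) : Prop :=
  mpos S B (firstM S B job) ≤ mpos S B M ∧ mpos S B M ≤ mpos S B (lastM S B job)

/-- Load of a machine under a schedule. -/
def iload (σ : IJob S.n S.m B.k → IMach S.n S.m B.k) (M : IMach S.n S.m B.k) : ℕ :=
  ∑ j ∈ Finset.univ.filter (fun j => σ j = M), jsize S B j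

/-- An 8-schedule: every job on an eligible machine, every machine with load exactly 8. -/
def EightSchedule (σ : IJob S.n S.m B.k → IMach S.n S.m B.k) : Prop :=
  (∀ j, ielig S B j (σ j)) ∧ ∀ M, iload S B σ M = 8

/-! ### Jobs eligible on truth and backward gateway machines -/

variable {S B}

lemma eq_truth_of_mpos {M : IMach S.n S.m B.k} {j : Fin S.n} {q : Fin 2}
    (hM : mpos S B M = mpos S B (.TMach j q)) : M = .TMach j q := by
  have := j.isLt
  have := q.isLt
  cases M with
  | TMach j' q' =>
    have := q'.isLt
    simp only [mpos] at hM
    have h1 : j' = j := Fin.ext (by omega)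
    have h2 : q' = q := Fin.ext (by omega)
    rw [h1, h2]
  | _ => simp only [mpos] at hM; omega

lemma eq_gateway_of_mpos {M : IMach S.n S.m B.k} {j : Fin S.n} {t : Fin 4}
    (hM : mpos S B M = mpos S B (.BGMach j t)) : M = .BGMach j t := by
  have := j.isLt
  have := t.isLt
  cases M with
  | TMach j' q' =>
    have := q'.isLt
    have := j'.isLt
    simp only [mpos] at hM
    omega
  | BGMach j' t' =>
    have := t'.isLt
    have := j'.isLt
    simp only [mpos] at hM
    have h1 : j' = j := Fin.ext (by omega)
    have h2 : t' = t := Fin.ext (by omega)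
    rw [h1, h2]
  | _ => simp only [mpos] at hM; omega

/-- Only `TJob(j)`, the private load and `VJob`s may run on `TMach(j,q)`. -/
lemma truth_cases {job : IJob S.n S.m B.k} {j : Fin S.n} {q : Fin 2}
    (h : ielig S B job (.TMach j q)) :
    job = .TJob j ∨ job = .PJob (.TMach j q) ∨ ∃ j' t b, job = .VJob j' t b := by
  have := j.isLt
  have := q.isLt
  obtain ⟨h1, h2⟩ := h
  cases job with
  | TJob j' =>
    simp only [mpos, firstM, lastM, Fin.val_zero, Fin.val_one] at h1 h2
    left
    have : j' = j := Fin.ext (by omega)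
    rw [this]
  | VJob j' t b => exact Or.inr (Or.inr ⟨_, _, _, rfl⟩)
  | PJob M =>
    have hM : M = .TMach j q := eq_truth_of_mpos (le_antisymm h1 h2)
    rw [hM]; simp
  | BJob ℓ j' t b =>
    simp only [firstM] at h1
    split_ifs at h1 <;> simp only [mpos] at h1 <;> omega
  | _ => simp only [mpos, firstM] at h1; omega

/-- Only the private load, `GJob`s and `VJob`s may run on `BGMach(j,t)`. -/
lemma gateway_cases {job : IJob S.n S.m B.k} {j : Fin S.n} {t : Fin 4}
    (h : ielig S B job (.BGMach j t)) :
    job = .PJob (.BGMach j t) ∨ (∃ j' t' b, job = .GJob j' t' b) ∨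
      ∃ j' t' b, job = .VJob j' t' b := by
  have := j.isLt
  have := t.isLt
  obtain ⟨h1, h2⟩ := h
  cases job with
  | TJob j' =>
    have := j'.isLt
    simp only [mpos, lastM, Fin.val_one] at h2
    omega
  | VJob j' t b => exact Or.inr (Or.inr ⟨_, _, _, rfl⟩)
  | GJob j' t b => exact Or.inr (Or.inl ⟨_, _, _, rfl⟩)
  | PJob M =>
    have hM : M = .BGMach j t := eq_gateway_of_mpos (le_antisymm h1 h2)
    rw [hM]; simp
  | BJob ℓ j' t b =>
    simp only [firstM] at h1
    split_ifs at h1 <;> simp only [mpos] at h1 <;> omega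
  | _ => simp only [mpos, firstM] at h1; omega

variable {σ : IJob S.n S.m B.k → IMach S.n S.m B.k}

lemma pjob_truth (h : EightSchedule S B σ) (j : Fin S.n) (q : Fin 2) :
    σ (.PJob (.TMach j q)) = .TMach j q :=
  eq_truth_of_mpos (le_antisymm (h.1 (.PJob (.TMach j q))).2 (h.1 (.PJob (.TMach j q))).1)

lemma pjob_gateway (h : EightSchedule S B σ) (j : Fin S.n) (t : Fin 4) :
    σ (.PJob (.BGMach j t)) = .BGMach j t :=
  eq_gateway_of_mpos (le_antisymm (h.1 (.PJob (.BGMach j t))).2 (h.1 (.PJob (.BGMach j t))).1)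

/-! ### Lower bounds on the number of `VJob`s per machine -/

/-- The `VJob`s placed on the machine `M`, as index triples. -/
def vOn (σ : IJob S.n S.m B.k → IMach S.n S.m B.k) (M : IMach S.n S.m B.k) :
    Finset (Fin S.n × Fin 4 × Bool) :=
  univ.filter fun v => σ (.VJob v.1 v.2.1 v.2.2) = M

lemma two_le_card_truth (h : EightSchedule S B σ) (j : Fin S.n) (q : Fin 2) :
    2 ≤ (vOn σ (.TMach j q)).card := by
  have hl := h.2 (.TMach j q)
  have hsub : univ.filter (fun job => σ job = .TMach j q) ⊆
      ({.TJob j, .PJob (.TMach j q)} : Finset (IJob S.n S.m B.k)) ∪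
        (vOn σ (.TMach j q)).image (fun v => .VJob v.1 v.2.1 v.2.2) := by
    intro job hj
    rw [mem_filter] at hj
    have he := h.1 job
    rw [hj.2] at he
    rcases truth_cases he with rfl | rfl | ⟨j', t, b, rfl⟩
    · simp
    · simp
    · exact mem_union_right _ (mem_image.2 ⟨(j', t, b), by simpa [vOn] using hj.2, rfl⟩)
  have h1 := sum_le_sum_of_subset (f := jsize S B) hsub
  have h2 := sum_union_inter (f := jsize S B)
    (s₁ := ({.TJob j, .PJob (.TMach j q)} : Finset (IJob S.n S.m B.k)))
    (s₂ := (vOn σ (.TMach j q)).image (fun v => .VJob v.1 v.2.1 v.2.2))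
  have h3 : ∑ x ∈ ({.TJob j, .PJob (.TMach j q)} : Finset (IJob S.n S.m B.k)), jsize S B x = 4 := by
    rw [sum_pair (by simp)]; rfl
  have h4 : ∑ x ∈ (vOn σ (.TMach j q)).image (fun v => (.VJob v.1 v.2.1 v.2.2 :
      IJob S.n S.m B.k)), jsize S B x ≤ _ := sum_le_card_nsmul ((vOn σ (.TMach j q)).image
    (fun v => (.VJob v.1 v.2.1 v.2.2 : IJob S.n S.m B.k))) (jsize S B) 3 (by
      intro x hx
      obtain ⟨v, -, rfl⟩ := mem_image.1 hx
      simp only [jsize]; split_ifs <;> omega)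
  have h5 := card_image_le (s := vOn σ (.TMach j q))
    (f := fun v => (.VJob v.1 v.2.1 v.2.2 : IJob S.n S.m B.k))
  unfold iload at hl
  rw [smul_eq_mul] at h4
  omega

/-- Two `GJob`s and the private load exceed the load 8, and one `GJob` with the private load
falls short of it. -/
lemma exists_vjob_gateway (h : EightSchedule S B σ) (j : Fin S.n) (t : Fin 4) :
    1 ≤ (vOn σ (.BGMach j t)).card := by
  rw [Nat.one_le_iff_ne_zero, Ne, card_eq_zero]
  intro hv
  have hl := h.2 (.BGMach j t)
  unfold iload at hl
  have hc : ∀ job, σ job = .BGMach j t →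
      job = .PJob (.BGMach j t) ∨ ∃ j' t' b, job = .GJob j' t' b := by
    intro job hj
    have he := h.1 job
    rw [hj] at he
    rcases gateway_cases he with h1 | h1 | ⟨j', t', b, rfl⟩
    · exact Or.inl h1
    · exact Or.inr h1
    · have : (j', t', b) ∈ vOn σ (.BGMach j t) := by simpa [vOn] using hj
      simp [hv] at this
  have hP := pjob_gateway h j t
  have hsP : jsize S B (.PJob (.BGMach j t)) = 1 := rfl
  have hsG : ∀ j' t' b, 4 ≤ jsize S B (.GJob j' t' b) ∧ jsize S B (.GJob j' t' b) ≤ 5 := by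
    intro j' t' b
    simp only [jsize]; split_ifs <;> omega
  by_cases hG : ∃ j' t' b, σ (.GJob j' t' b) = .BGMach j t
  · obtain ⟨j₁, t₁, b₁, h1⟩ := hG
    have hsub : univ.filter (fun job => σ job = .BGMach j t) ⊆
        ({.PJob (.BGMach j t), .GJob j₁ t₁ b₁} : Finset (IJob S.n S.m B.k)) := by
      intro job hj
      rw [mem_filter] at hj
      rcases hc job hj.2 with rfl | ⟨j₂, t₂, b₂, rfl⟩
      · simp
      · by_contra hne
        simp only [mem_insert, mem_singleton, not_or] at hne
        have hs : ({.PJob (.BGMach j t), .GJob j₁ t₁ b₁, .GJob j₂ t₂ b₂} :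
            Finset (IJob S.n S.m B.k)) ⊆ univ.filter (fun job => σ job = .BGMach j t) := by
          intro x hx
          simp only [mem_insert, mem_singleton] at hx
          rcases hx with rfl | rfl | rfl <;> simp [hP, h1, hj.2]
        have := sum_le_sum_of_subset (f := jsize S B) hs
        rw [sum_insert (by simp), sum_pair (Ne.symm hne.2)] at this
        have := hsG j₁ t₁ b₁
        have := hsG j₂ t₂ b₂
        omega
    have := sum_le_sum_of_subset (f := jsize S B) hsub
    rw [sum_pair (by simp)] at this
    have := hsG j₁ t₁ b₁
    omega
  · have hsub : univ.filter (fun job => σ job = .BGMach j t) ⊆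
        ({.PJob (.BGMach j t)} : Finset (IJob S.n S.m B.k)) := by
      intro job hj
      rw [mem_filter] at hj
      rcases hc job hj.2 with rfl | ⟨j₂, t₂, b₂, rfl⟩
      · simp
      · exact absurd ⟨_, _, _, hj.2⟩ hG
    have := sum_le_sum_of_subset (f := jsize S B) hsub
    rw [sum_singleton] at this
    omega

/-! ### Every stage holds its own `VJob`s -/

/-- The stage of a machine: `2j+q` for `TMach(j,q)`, `BGMach(j,2q)`, `BGMach(j,2q+1)`; all
machines further to the right get the out-of-range value `2n`. -/
def stage : IMach S.n S.m B.k → ℕ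
  | .TMach j q => 2 * (j : ℕ) + (q : ℕ)
  | .BGMach j t => 2 * (j : ℕ) + (t : ℕ) / 2
  | _ => 2 * S.n

lemma origin_le_stage (h : EightSchedule S B σ) (v : Fin S.n × Fin 4 × Bool)
    (hlt : stage (σ (.VJob v.1 v.2.1 v.2.2)) < 2 * S.n) :
    2 * (v.1 : ℕ) + (v.2.1 : ℕ) / 2 ≤ stage (σ (.VJob v.1 v.2.1 v.2.2)) := by
  obtain ⟨h1, h2⟩ := h.1 (.VJob v.1 v.2.1 v.2.2)
  have := v.1.isLt
  have := v.2.1.isLt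
  generalize σ (.VJob v.1 v.2.1 v.2.2) = M at *
  cases M with
  | TMach j q =>
    simp only [mpos, firstM, stage] at *
    omega
  | BGMach j t =>
    have := j.isLt
    have := t.isLt
    simp only [mpos, lastM, stage] at *
    omega
  | _ => simp only [stage] at hlt; omega

lemma four_le_card_stage (h : EightSchedule S B σ) (j : Fin S.n) (q : Fin 2) :
    4 ≤ (univ.filter fun v : Fin S.n × Fin 4 × Bool =>
      stage (σ (.VJob v.1 v.2.1 v.2.2)) = 2 * (j : ℕ) + (q : ℕ)).card := by
  have hq := q.isLt
  let t₀ : Fin 4 := ⟨2 * q, by omega⟩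
  let t₁ : Fin 4 := ⟨2 * q + 1, by omega⟩
  have hne : t₀ ≠ t₁ := by simp [t₀, t₁]
  have hd : ∀ M M' : IMach S.n S.m B.k, M ≠ M' → Disjoint (vOn σ M) (vOn σ M') := by
    intro M M' hM
    rw [disjoint_left]
    intro v hv hv'
    simp only [vOn, mem_filter, mem_univ, true_and] at hv hv'
    exact hM (hv.symm.trans hv')
  have hsub : vOn σ (.TMach j q) ∪ (vOn σ (.BGMach j t₀) ∪ vOn σ (.BGMach j t₁)) ⊆
      univ.filter fun v : Fin S.n × Fin 4 × Bool =>
        stage (σ (.VJob v.1 v.2.1 v.2.2)) = 2 * (j : ℕ) + (q : ℕ) := by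
    intro v hv
    simp only [vOn, mem_union, mem_filter, mem_univ, true_and] at hv ⊢
    rcases hv with hv | hv | hv <;> rw [hv] <;> simp only [stage, t₀, t₁] <;> omega
  have hcard := card_le_card hsub
  rw [card_union_of_disjoint, card_union_of_disjoint (hd _ _ (by simp [hne]))] at hcard
  · have := two_le_card_truth h j q
    have := exists_vjob_gateway h j t₀
    have := exists_vjob_gateway h j t₁
    omega
  · rw [disjoint_union_right]
    exact ⟨hd _ _ (by simp), hd _ _ (by simp)⟩

lemma card_origin_le (j : Fin S.n) (q : Fin 2) :
    (univ.filter fun v : Fin S.n × Fin 4 × Bool =>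
      2 * (v.1 : ℕ) + (v.2.1 : ℕ) / 2 = 2 * (j : ℕ) + (q : ℕ)).card ≤ 4 := by
  have hq := q.isLt
  let t₀ : Fin 4 := ⟨2 * q, by omega⟩
  let t₁ : Fin 4 := ⟨2 * q + 1, by omega⟩
  have hsub : (univ.filter fun v : Fin S.n × Fin 4 × Bool =>
      2 * (v.1 : ℕ) + (v.2.1 : ℕ) / 2 = 2 * (j : ℕ) + (q : ℕ)) ⊆
      {(j, t₀, false), (j, t₀, true), (j, t₁, false), (j, t₁, true)} := by
    rintro ⟨j', t, b⟩ hv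
    simp only [mem_filter, mem_univ, true_and] at hv
    have := t.isLt
    have h1 : j' = j := Fin.ext (by omega)
    have h2 : t = t₀ ∨ t = t₁ := by
      simp only [t₀, t₁, Fin.ext_iff]
      omega
    rcases h2 with h2 | h2 <;> cases b <;> simp [h1, h2]
  exact (card_le_card hsub).trans card_le_four

/-- Every stage holds exactly the `VJob`s that originate from it: by induction, the jobs from
smaller stages are used up there, so only four candidates remain for at least four places. -/
lemma stage_eq_iff (h : EightSchedule S B σ) (r : ℕ) (hr : r < 2 * S.n) :
    ∀ v : Fin S.n × Fin 4 × Bool, stage (σ (.VJob v.1 v.2.1 v.2.2)) = r ↔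
      2 * (v.1 : ℕ) + (v.2.1 : ℕ) / 2 = r := by
  induction r using Nat.strong_induction_on with
  | _ r ih =>
    have hj := four_le_card_stage h ⟨r / 2, by omega⟩ ⟨r % 2, by omega⟩
    have hc := card_origin_le (S := S) ⟨r / 2, by omega⟩ ⟨r % 2, by omega⟩
    simp only [Nat.div_add_mod] at hj hc
    have := eq_of_subset_of_card_le (s := univ.filter fun v : Fin S.n × Fin 4 × Bool =>
        stage (σ (.VJob v.1 v.2.1 v.2.2)) = r)
      (t := univ.filter fun v : Fin S.n × Fin 4 × Bool =>
        2 * (v.1 : ℕ) + (v.2.1 : ℕ) / 2 = r) (by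
        intro v hv
        simp only [mem_filter, mem_univ, true_and] at hv ⊢
        have hle := origin_le_stage h v (by omega)
        by_contra hne
        have := (ih (2 * (v.1 : ℕ) + (v.2.1 : ℕ) / 2) (by omega) (by omega) v).2 rfl
        omega) (hc.trans hj)
    intro v
    have hv := Finset.ext_iff.1 this v
    simpa only [mem_filter, mem_univ, true_and] using hv

/-! ### Contents of a truth machine -/

/-- The two possible contents of a truth machine, according to whether it holds the `TJob`. -/
lemma truth_content (h : EightSchedule S B σ) (j : Fin S.n) (q : Fin 2) (t₀ t₁ : Fin 4)
    (h₀ : (t₀ : ℕ) = 2 * (q : ℕ)) (h₁ : (t₁ : ℕ) = 2 * (q : ℕ) + 1) :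
    (σ (.TJob j) = .TMach j q → univ.filter (fun job => σ job = .TMach j q) =
      ({.VJob j t₀ false, .VJob j t₁ false, .TJob j, .PJob (.TMach j q)} :
        Finset (IJob S.n S.m B.k))) ∧
    (σ (.TJob j) ≠ .TMach j q → univ.filter (fun job => σ job = .TMach j q) =
      ({.VJob j t₀ true, .VJob j t₁ true, .PJob (.TMach j q)} :
        Finset (IJob S.n S.m B.k))) := by
  have hne : t₀ ≠ t₁ := fun he => by rw [he] at h₀; omega
  have hjlt := j.isLt
  have hqlt := q.isLt
  have hP := pjob_truth h j q
  set U : Finset (IJob S.n S.m B.k) :=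
    {.TJob j, .PJob (.TMach j q), .VJob j t₀ true, .VJob j t₀ false, .VJob j t₁ true,
      .VJob j t₁ false} with hU
  have hsub : ∀ job, σ job = .TMach j q → job ∈ U := by
    intro job hj
    have he := h.1 job
    rw [hj] at he
    rcases truth_cases he with rfl | rfl | ⟨j', t, b, rfl⟩
    · simp [hU]
    · simp [hU]
    · have hv := (stage_eq_iff h (2 * (j : ℕ) + q) (by omega) (j', t, b)).1 (by
        simp only [hj, stage])
      simp only at hv
      have := t.isLt
      have e1 : j' = j := Fin.ext (by omega)
      have e2 : t = t₀ ∨ t = t₁ := by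
        simp only [Fin.ext_iff]
        omega
      rcases e2 with e2 | e2 <;> cases b <;> simp [hU, e1, e2]
  have hF : univ.filter (fun job => σ job = .TMach j q) = U.filter (fun job => σ job = .TMach j q) := by
    ext job
    simp only [mem_filter, mem_univ, true_and]
    exact ⟨fun hj => ⟨hsub job hj, hj⟩, fun hj => hj.2⟩
  have hl := h.2 (.TMach j q)
  unfold iload at hl
  rw [hF, sum_filter, hU, sum_insert (by simp), sum_insert (by simp),
    sum_insert (by simp [hne]), sum_insert (by simp [hne]), sum_pair (by simp)] at hl
  simp only [hP, if_true, jsize, psize] at hl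
  rw [hF, hU]
  simp only [filter_insert, filter_singleton, hP, if_true]
  constructor
  · intro hT
    simp only [hT, if_true] at hl ⊢
    split_ifs at hl ⊢ <;> first | (exfalso; simp at hl; done) | (ext; simp; tauto)
  · intro hT
    simp only [hT, if_false] at hl ⊢
    split_ifs at hl ⊢ <;> first | (exfalso; simp at hl; done) | (ext; simp; tauto)

variable (S B)

/-- in any 8-schedule, for each variable `j` exactly one of the two
truth-assignment configurations occurs on the pair of machines `TMach(j,0)`,
`TMach(j,1)`. -/
theorem statement17 (σ : IJob S.n S.m B.k → IMach S.n S.m B.k)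
    (h : EightSchedule S B σ) (j : Fin S.n) :
    Xor'
      (Finset.univ.filter (fun job => σ job = .TMach j 0) =
        ({.VJob j 0 true, .VJob j 1 true, .PJob (.TMach j 0)} :
          Finset (IJob S.n S.m B.k)) ∧
       Finset.univ.filter (fun job => σ job = .TMach j 1) =
        ({.VJob j 2 false, .VJob j 3 false, .TJob j, .PJob (.TMach j 1)} :
          Finset (IJob S.n S.m B.k)))
      (Finset.univ.filter (fun job => σ job = .TMach j 0) =
        ({.VJob j 0 false, .VJob j 1 false, .TJob j, .PJob (.TMach j 0)} :
          Finset (IJob S.n S.m B.k)) ∧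
       Finset.univ.filter (fun job => σ job = .TMach j 1) =
        ({.VJob j 2 true, .VJob j 3 true, .PJob (.TMach j 1)} :
          Finset (IJob S.n S.m B.k))) := by
  obtain ⟨a0, b0⟩ := truth_content h j 0 0 1 rfl rfl
  obtain ⟨a1, b1⟩ := truth_content h j 1 2 3 rfl rfl
  -- The two possibilities disagree on whether `TJob j` runs on the first truth machine.
  have hexcl : ∀ F : Finset (IJob S.n S.m B.k),
      F = {.VJob j 0 true, .VJob j 1 true, .PJob (.TMach j 0)} →
      F ≠ {.VJob j 0 false, .VJob j 1 false, .TJob j, .PJob (.TMach j 0)} := by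
    intro F h1 h2
    have : IJob.TJob j ∈ F := by simp [h2]
    simp [h1] at this
  by_cases hT : σ (.TJob j) = .TMach j 0
  · have hT1 : σ (.TJob j) ≠ .TMach j 1 := by simp [hT]
    exact Or.inr ⟨⟨a0 hT, b1 hT1⟩, fun hx => hexcl _ hx.1 (a0 hT)⟩
  · have hT1 : σ (.TJob j) = .TMach j 1 := by
      apply eq_truth_of_mpos
      obtain ⟨h1, h2⟩ := h.1 (.TJob j)
      have hn : mpos S B (σ (.TJob j)) ≠ mpos S B (.TMach j 0) :=
        fun he => hT (eq_truth_of_mpos he)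
      simp only [firstM, lastM, mpos, Fin.val_zero, Fin.val_one] at h1 h2 hn ⊢
      omega
    exact Or.inl ⟨⟨b0 hT, a1 hT1⟩, fun hx => hexcl _ (b0 hT) hx.1⟩
end

section
/- The 3-SAT* instance has a satisfying truth assignment if and only if the constructed rank-3 restricted-assignment instance admits a 2-schedule (equivalently, a feasible schedule with makespan at most 2, since the total job size equals 2·|M|). This is the combinatorial core (the paper's Lemma 14) of the theorem that, unless P=NP, there is no better than 3/2-approximation for makespan minimization on unrelated machines with processing time matrix of rank at most 3. -/
/-!
The jobs transport one bit, a *signal*, for every literal occurrence. A machine `TMach(j,q)` that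
does not process `TJob(j)` must process both its variable jobs, while the other one pushes its two
variable jobs to the first sorting machines. Hence `VJob(j,t)` moves on iff the literal of `(j,t)`
is true when `x_j` is declared true iff `TJob(j)` is on `TMach(j,0)` (`signal_assign`).

A sorting machine with a private load has room for one more unit, so it either receives the
preceding job and pushes its own job forward, or keeps its own job (`signal_generic`). For the two
occurrences swapped in a step, the size-2 jobs of the larger one keep the smaller one on its own
track, and the chain `ASJob(ℓ,0)`, `ABJob(ℓ,0)`, `ABJob(ℓ,1)`, `ASJob(ℓ,1)` supplies or withholds
the unit that would otherwise be a private load; the signals again stay unchanged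
(`signal_exceptional`). So a clause machine receives a unit job iff its literal is true. The three
machines of a clause have total capacity 6 and its clause jobs have total size 5 or 4, so exactly
1 or 2 literals are true (`satisfies_of_schedule`). The order in which the pairs are swapped plays
no role, only that the two swapped occurrences are distinct.

Conversely, an assignment determines all signals and hence a schedule (`sched`), with a suitable
distribution of the clause jobs (`exists_clause_placement`); every load is then 2
(`exists_schedule`).

Both directions use the same formulas for the loads, sums of indicators `ind σ J M` over the jobs
eligible on `M`. With the equations saying that every job is placed once, the first direction is
linear arithmetic over the naturals.
-/

open Finset

/-- The machines of the rank-3 restricted-assignment instance. -/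
inductive KMach (n m k : ℕ) where
  | TMach : Fin n → Fin 2 → KMach n m k
  | SMach : Fin k → Fin 3 → Fin n → Fin 4 → KMach n m k
  | AMach : Fin k → Fin 3 → KMach n m k
  | CMach : Fin (2 * m) → Fin 3 → KMach n m k
  deriving DecidableEq, Fintype

/-- The jobs of the rank-3 restricted-assignment instance; `PS` and `PA` are the private
loads of the sorting and amplifier machines, respectively (`PS` has size 0 on the four
exceptional sorting machines per sorting step, which carry no private load). -/
inductive KJob (n m k : ℕ) where
  | TJob : Fin n → KJob n m k
  | VJob : Fin n → Fin 4 → KJob n m k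
  | SJob : Fin k → Fin 3 → Fin n → Fin 4 → KJob n m k
  | ABJob : Fin k → Fin 2 → KJob n m k
  | ASJob : Fin k → Fin 3 → KJob n m k
  | CJob : Fin (2 * m) → Fin 3 → KJob n m k
  | PS : Fin k → Fin 3 → Fin n → Fin 4 → KJob n m k
  | PA : Fin k → Fin 3 → KJob n m k
  deriving DecidableEq, Fintype

variable (S : SAT3Star) (B : BubbleData S)

/-- Sizes of the jobs. -/
def ksize : KJob S.n S.m B.k → ℕ
  | .TJob _ => 2
  | .VJob _ _ => 1
  | .SJob ℓ q j t => if (q : ℕ) < 2 ∧ (j, t) = B.big ℓ then 2 else 1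
  | .ABJob _ _ => 1
  | .ASJob _ _ => 1
  | .CJob i s =>
      if (s : ℕ) = 0 then 2
      else if (s : ℕ) = 1 then 1
      else if (i : ℕ) < S.m then 2 else 1
  | .PS ℓ q j t =>
      if (j, t) = B.big ℓ ∨ ((q : ℕ) = 2 ∧ (j, t) = B.small ℓ) then 0 else 1
  | .PA _ _ => 1

/-- The generic second eligible machine of `SJob(ℓ,q,j,t)`:
`SMach(ℓ+⌊q/2⌋, (q+1) mod 3, j, t)`, which is `CMach(κ(j,t))` for `ℓ = k-1`, `q = 2`. -/
def ksucc (ℓ : Fin B.k) (q : Fin 3) (j : Fin S.n) (t : Fin 4) : KMach S.n S.m B.k :=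
  if (q : ℕ) = 0 then .SMach ℓ 1 j t
  else if (q : ℕ) = 1 then .SMach ℓ 2 j t
  else if h : (ℓ : ℕ) + 1 < B.k then .SMach ⟨(ℓ : ℕ) + 1, h⟩ 0 j t
  else .CMach (S.occ (j, t)).1 (S.occ (j, t)).2

/-- Eligibility of the jobs (needs `0 < k` so that `SMach(0,0,j,t)` exists). -/
def kelig (hk : 0 < B.k) : KJob S.n S.m B.k → KMach S.n S.m B.k → Prop
  | .TJob j, M => M = .TMach j 0 ∨ M = .TMach j 1
  | .VJob j t, M =>
      M = .TMach j ⟨(t : ℕ) / 2, by have := t.isLt; omega⟩ ∨ M = .SMach ⟨0, hk⟩ 0 j t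
  | .SJob ℓ q j t, M =>
      if (q : ℕ) = 0 ∧ (j, t) = B.big ℓ then
        M = .SMach ℓ 0 (B.big ℓ).1 (B.big ℓ).2 ∨
        M = .SMach ℓ 0 (B.small ℓ).1 (B.small ℓ).2 ∨
        M = .SMach ℓ 1 (B.big ℓ).1 (B.big ℓ).2
      else if (q : ℕ) = 0 ∧ (j, t) = B.small ℓ then
        M = .SMach ℓ 0 (B.small ℓ).1 (B.small ℓ).2 ∨
        M = .SMach ℓ 1 (B.small ℓ).1 (B.small ℓ).2 ∨
        M = .SMach ℓ 1 (B.big ℓ).1 (B.big ℓ).2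
      else M = .SMach ℓ q j t ∨ M = ksucc S B ℓ q j t
  | .ABJob ℓ q, M => M = .AMach ℓ q.castSucc ∨ M = .AMach ℓ q.succ
  | .ASJob ℓ q, M =>
      if (q : ℕ) = 0 then
        M = .AMach ℓ 0 ∨ M = .SMach ℓ 0 (B.big ℓ).1 (B.big ℓ).2
      else if (q : ℕ) = 1 then
        M = .AMach ℓ 2 ∨ M = .SMach ℓ 2 (B.small ℓ).1 (B.small ℓ).2
      else
        M = .SMach ℓ 2 (B.small ℓ).1 (B.small ℓ).2 ∨
        M = .SMach ℓ 2 (B.big ℓ).1 (B.big ℓ).2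
  | .CJob i _, M => ∃ s' : Fin 3, M = .CMach i s'
  | .PS ℓ q j t, M => M = .SMach ℓ q j t
  | .PA ℓ q, M => M = .AMach ℓ q

/-- Load of a machine under a schedule. -/
def kload (σ : KJob S.n S.m B.k → KMach S.n S.m B.k) (M : KMach S.n S.m B.k) : ℕ :=
  ∑ j ∈ Finset.univ.filter (fun j => σ j = M), ksize S B j

namespace Sched

variable {S} {B}

/-- The job that carries the signal of the occurrence `(j,t)` into `SMach(ℓ,0,j,t)`: `VJob(j,t)` in
the first sorting step, the last sorting job of the preceding step afterwards. -/
def prevJob (ℓ : Fin B.k) (j : Fin S.n) (t : Fin 4) : KJob S.n S.m B.k :=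
  if h : (ℓ : ℕ) = 0 then .VJob j t
  else .SJob ⟨(ℓ : ℕ) - 1, by have := ℓ.isLt; omega⟩ 2 j t

/-- Indicator of the event that the schedule `σ` puts job `J` on machine `M`. -/
def ind (σ : KJob S.n S.m B.k → KMach S.n S.m B.k) (J : KJob S.n S.m B.k)
    (M : KMach S.n S.m B.k) : ℕ := if σ J = M then 1 else 0

lemma big_ne_small (ℓ : Fin B.k) : B.big ℓ ≠ B.small ℓ := fun h => by
  have := B.step_adj ℓ
  rw [h] at this
  omega

variable {hk : 0 < B.k} {σ : KJob S.n S.m B.k → KMach S.n S.m B.k}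

/-- The load of `M` may be computed over any finite set containing all jobs eligible on `M`. -/
lemma kload_eq (hσ : ∀ J, kelig S B hk J (σ J)) (M : KMach S.n S.m B.k)
    (L : Finset (KJob S.n S.m B.k)) (hL : ∀ J, kelig S B hk J M → J ∈ L) :
    kload S B σ M = ∑ J ∈ L, ksize S B J * ind σ J M := by
  unfold kload ind
  rw [Finset.sum_filter]
  simp only [mul_ite, mul_one, mul_zero]
  symm
  apply Finset.sum_subset (Finset.subset_univ _)
  intro J _ hJ
  rw [if_neg]
  intro h
  exact hJ (hL J (h ▸ hσ J))

/-! ### Eligible jobs of each machine -/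

lemma elig_T (j : Fin S.n) (q : Fin 2) (J : KJob S.n S.m B.k)
    (h : kelig S B hk J (.TMach j q)) :
    J = .TJob j ∨ ∃ t : Fin 4, (t : ℕ) / 2 = q ∧ J = .VJob j t := by
  rcases J with a | ⟨a, b⟩ | ⟨a, b, c, d⟩ | _ | ⟨a, b⟩ | _ | _ | _ <;>
    simp only [kelig, ksucc] at h <;> (try split_ifs at h) <;> grind

lemma elig_A (ℓ : Fin B.k) (q : Fin 3) (J : KJob S.n S.m B.k)
    (h : kelig S B hk J (.AMach ℓ q)) :
    J = .PA ℓ q ∨ (∃ r : Fin 2, (r.castSucc = q ∨ r.succ = q) ∧ J = .ABJob ℓ r) ∨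
      (q = 0 ∧ J = .ASJob ℓ 0) ∨ (q = 2 ∧ J = .ASJob ℓ 1) := by
  rcases J with a | ⟨a, b⟩ | ⟨a, b, c, d⟩ | _ | ⟨a, b⟩ | _ | _ | _ <;>
    simp only [kelig, ksucc] at h <;> (try split_ifs at h) <;> grind

lemma elig_C (i : Fin (2 * S.m)) (s : Fin 3) (J : KJob S.n S.m B.k)
    (h : kelig S B hk J (.CMach i s)) :
    J = .SJob ⟨B.k - 1, by omega⟩ 2 (S.occ.symm (i, s)).1 (S.occ.symm (i, s)).2 ∨
      ∃ s', J = .CJob i s' := by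
  rcases J with a | ⟨a, b⟩ | ⟨a, b, c, d⟩ | _ | ⟨a, b⟩ | _ | _ | _ <;>
    simp only [kelig, ksucc] at h <;> (try split_ifs at h) <;> try grind
  obtain ⟨s', hs⟩ := h
  obtain ⟨rfl, -⟩ : i = _ ∧ s = s' := by simpa using hs
  exact Or.inr ⟨_, rfl⟩

lemma elig_S0 (ℓ : Fin B.k) (j : Fin S.n) (t : Fin 4) (J : KJob S.n S.m B.k)
    (h : kelig S B hk J (.SMach ℓ 0 j t)) :
    J = prevJob ℓ j t ∨ J = .PS ℓ 0 j t ∨ J = .SJob ℓ 0 j t ∨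
      ((j, t) = B.big ℓ ∧ J = .ASJob ℓ 0) ∨
      ((j, t) = B.small ℓ ∧ J = .SJob ℓ 0 (B.big ℓ).1 (B.big ℓ).2) := by
  rcases J with a | ⟨a, b⟩ | ⟨a, b, c, d⟩ | _ | ⟨a, b⟩ | _ | _ | _ <;>
    simp only [kelig, ksucc] at h <;> (try split_ifs at h) <;> grind [prevJob]

lemma elig_S1 (ℓ : Fin B.k) (j : Fin S.n) (t : Fin 4) (J : KJob S.n S.m B.k)
    (h : kelig S B hk J (.SMach ℓ 1 j t)) :
    J = .SJob ℓ 0 j t ∨ J = .PS ℓ 1 j t ∨ J = .SJob ℓ 1 j t ∨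
      ((j, t) = B.big ℓ ∧ J = .SJob ℓ 0 (B.small ℓ).1 (B.small ℓ).2) := by
  rcases J with a | ⟨a, b⟩ | ⟨a, b, c, d⟩ | _ | ⟨a, b⟩ | _ | _ | _ <;>
    simp only [kelig, ksucc] at h <;> (try split_ifs at h) <;> grind

lemma elig_S2 (ℓ : Fin B.k) (j : Fin S.n) (t : Fin 4) (J : KJob S.n S.m B.k)
    (h : kelig S B hk J (.SMach ℓ 2 j t)) :
    J = .SJob ℓ 1 j t ∨ J = .PS ℓ 2 j t ∨ J = .SJob ℓ 2 j t ∨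
      ((j, t) = B.big ℓ ∧ J = .ASJob ℓ 2) ∨
      ((j, t) = B.small ℓ ∧ (J = .ASJob ℓ 1 ∨ J = .ASJob ℓ 2)) := by
  rcases J with a | ⟨a, b⟩ | ⟨a, b, c, d⟩ | _ | ⟨a, b⟩ | _ | _ | _ <;>
    simp only [kelig, ksucc] at h <;> (try split_ifs at h) <;> grind

/-! ### Loads of the machines -/

lemma ind_PS (hσ : ∀ J, kelig S B hk J (σ J)) (ℓ : Fin B.k) (q : Fin 3) (j : Fin S.n)
    (t : Fin 4) : ind σ (.PS ℓ q j t) (.SMach ℓ q j t) = 1 := if_pos (hσ (.PS ℓ q j t))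

lemma ind_PA (hσ : ∀ J, kelig S B hk J (σ J)) (ℓ : Fin B.k) (q : Fin 3) :
    ind σ (.PA ℓ q) (.AMach ℓ q) = 1 := if_pos (hσ (.PA ℓ q))

lemma ksize_prevJob (ℓ : Fin B.k) (j : Fin S.n) (t : Fin 4) :
    ksize S B (prevJob ℓ j t) = 1 := by
  unfold prevJob
  split_ifs <;> simp [ksize]

lemma prevJob_ne_SJob (ℓ : Fin B.k) (j j' : Fin S.n) (t t' : Fin 4) :
    prevJob ℓ j t ≠ .SJob ℓ 0 j' t' := by
  unfold prevJob
  split_ifs <;> simp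

lemma prevJob_ne_PS (ℓ ℓ' : Fin B.k) (q : Fin 3) (j j' : Fin S.n) (t t' : Fin 4) :
    prevJob ℓ j t ≠ .PS ℓ' q j' t' := by
  unfold prevJob
  split_ifs <;> simp

lemma prevJob_ne_ASJob (ℓ ℓ' : Fin B.k) (q : Fin 3) (j : Fin S.n) (t : Fin 4) :
    prevJob ℓ j t ≠ .ASJob ℓ' q := by
  unfold prevJob
  split_ifs <;> simp

lemma load_T0 (hσ : ∀ J, kelig S B hk J (σ J)) (j : Fin S.n) :
    kload S B σ (.TMach j 0) = 2 * ind σ (.TJob j) (.TMach j 0)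
      + ind σ (.VJob j 0) (.TMach j 0) + ind σ (.VJob j 1) (.TMach j 0) := by
  rw [kload_eq hσ _ {.TJob j, .VJob j 0, .VJob j 1}]
  · simp [ksize, add_assoc]
  · intro J hJ
    have := elig_T j 0 J hJ
    simp [Fin.exists_fin_succ] at this ⊢
    exact this

lemma load_T1 (hσ : ∀ J, kelig S B hk J (σ J)) (j : Fin S.n) :
    kload S B σ (.TMach j 1) = 2 * ind σ (.TJob j) (.TMach j 1)
      + ind σ (.VJob j 2) (.TMach j 1) + ind σ (.VJob j 3) (.TMach j 1) := by
  rw [kload_eq hσ _ {.TJob j, .VJob j 2, .VJob j 3}]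
  · simp [ksize, add_assoc]
  · intro J hJ
    have := elig_T j 1 J hJ
    simp [Fin.exists_fin_succ] at this ⊢
    exact this

lemma load_A0 (hσ : ∀ J, kelig S B hk J (σ J)) (ℓ : Fin B.k) :
    kload S B σ (.AMach ℓ 0) = 1 + ind σ (.ABJob ℓ 0) (.AMach ℓ 0)
      + ind σ (.ASJob ℓ 0) (.AMach ℓ 0) := by
  rw [kload_eq hσ _ {.PA ℓ 0, .ABJob ℓ 0, .ASJob ℓ 0}]
  · simp [ksize, ind_PA hσ, add_assoc]
  · intro J hJ
    have := elig_A ℓ 0 J hJ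
    simp at this ⊢
    exact this

lemma load_A1 (hσ : ∀ J, kelig S B hk J (σ J)) (ℓ : Fin B.k) :
    kload S B σ (.AMach ℓ 1) = 1 + ind σ (.ABJob ℓ 0) (.AMach ℓ 1)
      + ind σ (.ABJob ℓ 1) (.AMach ℓ 1) := by
  rw [kload_eq hσ _ {.PA ℓ 1, .ABJob ℓ 0, .ABJob ℓ 1}]
  · simp [ksize, ind_PA hσ, add_assoc]
  · intro J hJ
    have := elig_A ℓ 1 J hJ
    simp at this ⊢
    exact this

lemma load_A2 (hσ : ∀ J, kelig S B hk J (σ J)) (ℓ : Fin B.k) :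
    kload S B σ (.AMach ℓ 2) = 1 + ind σ (.ABJob ℓ 1) (.AMach ℓ 2)
      + ind σ (.ASJob ℓ 1) (.AMach ℓ 2) := by
  rw [kload_eq hσ _ {.PA ℓ 2, .ABJob ℓ 1, .ASJob ℓ 1}]
  · simp [ksize, ind_PA hσ, add_assoc]
  · intro J hJ
    have := elig_A ℓ 2 J hJ
    simp [Fin.exists_fin_two] at this ⊢
    exact this

lemma load_C (hσ : ∀ J, kelig S B hk J (σ J)) (i : Fin (2 * S.m)) (s : Fin 3) :
    kload S B σ (.CMach i s) =
      ind σ (.SJob ⟨B.k - 1, by omega⟩ 2 (S.occ.symm (i, s)).1 (S.occ.symm (i, s)).2)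
        (.CMach i s)
      + 2 * ind σ (.CJob i 0) (.CMach i s) + ind σ (.CJob i 1) (.CMach i s)
      + (if (i : ℕ) < S.m then 2 else 1) * ind σ (.CJob i 2) (.CMach i s) := by
  rw [kload_eq hσ _ {.SJob ⟨B.k - 1, by omega⟩ 2 (S.occ.symm (i, s)).1 (S.occ.symm (i, s)).2,
    .CJob i 0, .CJob i 1, .CJob i 2}]
  · simp [ksize, add_assoc]
  · intro J hJ
    have := elig_C i s J hJ
    simp [Fin.exists_fin_succ] at this ⊢
    exact this

section Generic

variable {ℓ : Fin B.k} {j : Fin S.n} {t : Fin 4}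

lemma load_S0 (hσ : ∀ J, kelig S B hk J (σ J)) (hb : (j, t) ≠ B.big ℓ) (hs : (j, t) ≠ B.small ℓ) :
    kload S B σ (.SMach ℓ 0 j t) = 1 + ind σ (prevJob ℓ j t) (.SMach ℓ 0 j t)
      + ind σ (.SJob ℓ 0 j t) (.SMach ℓ 0 j t) := by
  rw [kload_eq hσ _ {.PS ℓ 0 j t, prevJob ℓ j t, .SJob ℓ 0 j t}]
  · simp [ksize_prevJob, prevJob_ne_SJob, (prevJob_ne_PS _ _ _ _ _ _ _).symm,
      ind_PS hσ, add_assoc]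
    simp [ksize, hb]
  · intro J hJ
    have := elig_S0 ℓ j t J hJ
    simp at this ⊢
    tauto

lemma load_S1 (hσ : ∀ J, kelig S B hk J (σ J)) (hb : (j, t) ≠ B.big ℓ) :
    kload S B σ (.SMach ℓ 1 j t) = 1 + ind σ (.SJob ℓ 0 j t) (.SMach ℓ 1 j t)
      + ind σ (.SJob ℓ 1 j t) (.SMach ℓ 1 j t) := by
  rw [kload_eq hσ _ {.PS ℓ 1 j t, .SJob ℓ 0 j t, .SJob ℓ 1 j t}]
  · simp [ksize, ind_PS hσ, hb, add_assoc]
  · intro J hJ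
    have := elig_S1 ℓ j t J hJ
    simp at this ⊢
    tauto

lemma load_S2 (hσ : ∀ J, kelig S B hk J (σ J)) (hb : (j, t) ≠ B.big ℓ) (hs : (j, t) ≠ B.small ℓ) :
    kload S B σ (.SMach ℓ 2 j t) = 1 + ind σ (.SJob ℓ 1 j t) (.SMach ℓ 2 j t)
      + ind σ (.SJob ℓ 2 j t) (.SMach ℓ 2 j t) := by
  rw [kload_eq hσ _ {.PS ℓ 2 j t, .SJob ℓ 1 j t, .SJob ℓ 2 j t}]
  · simp [ksize, ind_PS hσ, hb, hs, add_assoc]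
  · intro J hJ
    have := elig_S2 ℓ j t J hJ
    simp at this ⊢
    tauto

end Generic

section Exceptional

variable {ℓ : Fin B.k} {j j' : Fin S.n} {t t' : Fin 4}

lemma load_S0_big (hσ : ∀ J, kelig S B hk J (σ J)) (hb : B.big ℓ = (j, t)) :
    kload S B σ (.SMach ℓ 0 j t) = ind σ (prevJob ℓ j t) (.SMach ℓ 0 j t)
      + 2 * ind σ (.SJob ℓ 0 j t) (.SMach ℓ 0 j t)
      + ind σ (.ASJob ℓ 0) (.SMach ℓ 0 j t) := by
  have hbs := big_ne_small ℓ
  rw [kload_eq hσ _ {.PS ℓ 0 j t, prevJob ℓ j t, .SJob ℓ 0 j t, .ASJob ℓ 0}]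
  · simp [ksize_prevJob, prevJob_ne_SJob, (prevJob_ne_PS _ _ _ _ _ _ _).symm,
      prevJob_ne_ASJob, add_assoc]
    simp [ksize, hb]
  · intro J hJ
    have := elig_S0 ℓ j t J hJ
    simp at this ⊢
    grind

lemma load_S0_small (hσ : ∀ J, kelig S B hk J (σ J)) (hb : B.big ℓ = (j, t))
    (hs : B.small ℓ = (j', t')) :
    kload S B σ (.SMach ℓ 0 j' t') = 1 + ind σ (prevJob ℓ j' t') (.SMach ℓ 0 j' t')
      + 2 * ind σ (.SJob ℓ 0 j t) (.SMach ℓ 0 j' t')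
      + ind σ (.SJob ℓ 0 j' t') (.SMach ℓ 0 j' t') := by
  have hbs := big_ne_small ℓ
  rw [hb, hs] at hbs
  have h1 : ¬ (j = j' ∧ t = t') := by simpa using hbs
  have h2 : ¬ (j' = j ∧ t' = t) := by grind
  rw [kload_eq hσ _ {.PS ℓ 0 j' t', prevJob ℓ j' t', .SJob ℓ 0 j t, .SJob ℓ 0 j' t'}]
  · simp [ksize_prevJob, prevJob_ne_SJob, (prevJob_ne_PS _ _ _ _ _ _ _).symm,
      ind_PS hσ, h1, add_assoc]
    simp [ksize, hb, h2]
  · intro J hJ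
    have := elig_S0 ℓ j' t' J hJ
    simp at this ⊢
    grind

lemma load_S1_big (hσ : ∀ J, kelig S B hk J (σ J)) (hb : B.big ℓ = (j, t))
    (hs : B.small ℓ = (j', t')) :
    kload S B σ (.SMach ℓ 1 j t) = 2 * ind σ (.SJob ℓ 0 j t) (.SMach ℓ 1 j t)
      + ind σ (.SJob ℓ 0 j' t') (.SMach ℓ 1 j t)
      + 2 * ind σ (.SJob ℓ 1 j t) (.SMach ℓ 1 j t) := by
  have hbs := big_ne_small ℓ
  rw [hb, hs] at hbs
  have h1 : ¬ (j = j' ∧ t = t') := by simpa using hbs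
  have h2 : ¬ (j' = j ∧ t' = t) := by grind
  rw [kload_eq hσ _ {.PS ℓ 1 j t, .SJob ℓ 0 j t, .SJob ℓ 0 j' t', .SJob ℓ 1 j t}]
  · simp [ksize, hb, h1, h2, add_assoc]
  · intro J hJ
    have := elig_S1 ℓ j t J hJ
    simp at this ⊢
    grind

lemma load_S2_big (hσ : ∀ J, kelig S B hk J (σ J)) (hb : B.big ℓ = (j, t)) :
    kload S B σ (.SMach ℓ 2 j t) = 2 * ind σ (.SJob ℓ 1 j t) (.SMach ℓ 2 j t)
      + ind σ (.SJob ℓ 2 j t) (.SMach ℓ 2 j t)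
      + ind σ (.ASJob ℓ 2) (.SMach ℓ 2 j t) := by
  have hbs := big_ne_small ℓ
  rw [kload_eq hσ _ {.PS ℓ 2 j t, .SJob ℓ 1 j t, .SJob ℓ 2 j t, .ASJob ℓ 2}]
  · simp [ksize, hb, add_assoc]
  · intro J hJ
    have := elig_S2 ℓ j t J hJ
    simp at this ⊢
    grind

lemma load_S2_small (hσ : ∀ J, kelig S B hk J (σ J)) (hs : B.small ℓ = (j', t')) :
    kload S B σ (.SMach ℓ 2 j' t') = ind σ (.SJob ℓ 1 j' t') (.SMach ℓ 2 j' t')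
      + ind σ (.SJob ℓ 2 j' t') (.SMach ℓ 2 j' t')
      + ind σ (.ASJob ℓ 1) (.SMach ℓ 2 j' t') + ind σ (.ASJob ℓ 2) (.SMach ℓ 2 j' t') := by
  have hbs := big_ne_small ℓ
  have hb : ¬ ((j', t') = B.big ℓ) := by grind
  rw [kload_eq hσ _ {.PS ℓ 2 j' t', .SJob ℓ 1 j' t', .SJob ℓ 2 j' t', .ASJob ℓ 1, .ASJob ℓ 2}]
  · simp [ksize, hb, hs, add_assoc]
  · intro J hJ
    have := elig_S2 ℓ j' t' J hJ
    simp at this ⊢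
    grind

end Exceptional

/-! ### From 2-schedules to satisfying assignments -/

lemma ind_le_one (J : KJob S.n S.m B.k) (M : KMach S.n S.m B.k) : ind σ J M ≤ 1 := by
  unfold ind
  split_ifs <;> simp

lemma ind_add_eq_one {J : KJob S.n S.m B.k} {M M' : KMach S.n S.m B.k}
    (h : σ J = M ∨ σ J = M') (hne : M ≠ M') : ind σ J M + ind σ J M' = 1 := by
  unfold ind
  rcases h with h | h <;> simp [h, hne, hne.symm]

lemma ind_add_add_eq_one {J : KJob S.n S.m B.k} {M M' M'' : KMach S.n S.m B.k}
    (h : σ J = M ∨ σ J = M' ∨ σ J = M'') (hne : M ≠ M') (hne' : M ≠ M'') (hne'' : M' ≠ M'') :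
    ind σ J M + ind σ J M' + ind σ J M'' = 1 := by
  unfold ind
  rcases h with h | h | h <;> simp [h, hne, hne.symm, hne', hne'.symm, hne'', hne''.symm]

lemma ksucc_zero (ℓ : Fin B.k) (j : Fin S.n) (t : Fin 4) :
    ksucc S B ℓ 0 j t = .SMach ℓ 1 j t := rfl

lemma ksucc_one (ℓ : Fin B.k) (j : Fin S.n) (t : Fin 4) :
    ksucc S B ℓ 1 j t = .SMach ℓ 2 j t := rfl

lemma ksucc_ne (ℓ : Fin B.k) (q : Fin 3) (j : Fin S.n) (t : Fin 4) :
    KMach.SMach ℓ q j t ≠ ksucc S B ℓ q j t := by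
  unfold ksucc
  split_ifs <;> grind

lemma elig_generic (hσ : ∀ J, kelig S B hk J (σ J)) {ℓ : Fin B.k} {q : Fin 3} {j : Fin S.n}
    {t : Fin 4} (h : q ≠ 0 ∨ ((j, t) ≠ B.big ℓ ∧ (j, t) ≠ B.small ℓ)) :
    ind σ (.SJob ℓ q j t) (.SMach ℓ q j t) + ind σ (.SJob ℓ q j t) (ksucc S B ℓ q j t) = 1 := by
  apply ind_add_eq_one _ (ksucc_ne ℓ q j t)
  have := hσ (.SJob ℓ q j t)
  simp only [kelig] at this
  split_ifs at this <;> grind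

/-- Each of the three layers of a sorting step without a size-2 job just passes the signal on. -/
lemma signal_generic (hσ : ∀ J, kelig S B hk J (σ J)) (hl : ∀ M, kload S B σ M = 2)
    {ℓ : Fin B.k} {j : Fin S.n} {t : Fin 4} (hb : (j, t) ≠ B.big ℓ) (hs : (j, t) ≠ B.small ℓ) :
    ind σ (prevJob ℓ j t) (.SMach ℓ 0 j t) =
      ind σ (.SJob ℓ 2 j t) (ksucc S B ℓ 2 j t) := by
  have l0 := load_S0 hσ hb hs
  have l1 := load_S1 hσ hb
  have l2 := load_S2 hσ hb hs
  have e0 := elig_generic hσ (q := 0) (Or.inr ⟨hb, hs⟩)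
  have e1 := elig_generic hσ (q := 1) (j := j) (t := t) (ℓ := ℓ) (Or.inl (by decide))
  have e2 := elig_generic hσ (q := 2) (j := j) (t := t) (ℓ := ℓ) (Or.inl (by decide))
  rw [hl] at l0 l1 l2
  rw [ksucc_zero] at e0
  rw [ksucc_one] at e1
  omega

/-- The two occurrences swapped in a sorting step also keep their signals. The size-2 jobs of the
larger one force the smaller one onto its own track, and the signal of the larger one runs through
the amplifier machines, which makes up for the missing private loads. -/
lemma signal_exceptional (hσ : ∀ J, kelig S B hk J (σ J)) (hl : ∀ M, kload S B σ M = 2)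
    {ℓ : Fin B.k} {j j' : Fin S.n} {t t' : Fin 4} (hb : B.big ℓ = (j, t))
    (hs : B.small ℓ = (j', t')) :
    ind σ (prevJob ℓ j t) (.SMach ℓ 0 j t) = ind σ (.SJob ℓ 2 j t) (ksucc S B ℓ 2 j t) ∧
    ind σ (prevJob ℓ j' t') (.SMach ℓ 0 j' t') =
      ind σ (.SJob ℓ 2 j' t') (ksucc S B ℓ 2 j' t') := by
  have hbs := big_ne_small ℓ
  rw [hb, hs] at hbs
  have h1 : ¬ (j = j' ∧ t = t') := by simpa using hbs
  have h2 : ¬ (j' = j ∧ t' = t) := by grind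
  have l0 := load_S0_big hσ hb
  have l0' := load_S0_small hσ hb hs
  have l1 := load_S1_big hσ hb hs
  have l1' := load_S1 hσ (ℓ := ℓ) (j := j') (t := t') (by rw [hb]; exact hbs.symm)
  have l2 := load_S2_big hσ hb
  have l2' := load_S2_small hσ hs
  have a0 := load_A0 hσ ℓ
  have a1 := load_A1 hσ ℓ
  have a2 := load_A2 hσ ℓ
  rw [hl] at l0 l0' l1 l1' l2 l2' a0 a1 a2
  have e0 : ind σ (.SJob ℓ 0 j t) (.SMach ℓ 0 j t) + ind σ (.SJob ℓ 0 j t) (.SMach ℓ 0 j' t')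
      + ind σ (.SJob ℓ 0 j t) (.SMach ℓ 1 j t) = 1 := by
    apply ind_add_add_eq_one _ (by simpa using h1) (by simp) (by simp)
    simpa [kelig, hb, hs] using hσ (.SJob ℓ 0 j t)
  have e0' : ind σ (.SJob ℓ 0 j' t') (.SMach ℓ 0 j' t')
      + ind σ (.SJob ℓ 0 j' t') (.SMach ℓ 1 j' t')
      + ind σ (.SJob ℓ 0 j' t') (.SMach ℓ 1 j t) = 1 := by
    apply ind_add_add_eq_one _ (by simp) (by simp) (by simpa using h2)
    simpa [kelig, hb, hs, h2] using hσ (.SJob ℓ 0 j' t')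
  have e1 := elig_generic hσ (q := 1) (j := j) (t := t) (ℓ := ℓ) (Or.inl (by decide))
  have e2 := elig_generic hσ (q := 2) (j := j) (t := t) (ℓ := ℓ) (Or.inl (by decide))
  have e1' := elig_generic hσ (q := 1) (j := j') (t := t') (ℓ := ℓ) (Or.inl (by decide))
  have e2' := elig_generic hσ (q := 2) (j := j') (t := t') (ℓ := ℓ) (Or.inl (by decide))
  rw [ksucc_one] at e1 e1'
  have b0 : ind σ (.ABJob ℓ 0) (.AMach ℓ 0) + ind σ (.ABJob ℓ 0) (.AMach ℓ 1) = 1 :=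
    ind_add_eq_one (hσ (.ABJob ℓ 0)) (by simp)
  have b1 : ind σ (.ABJob ℓ 1) (.AMach ℓ 1) + ind σ (.ABJob ℓ 1) (.AMach ℓ 2) = 1 :=
    ind_add_eq_one (hσ (.ABJob ℓ 1)) (by simp)
  have c0 : ind σ (.ASJob ℓ 0) (.AMach ℓ 0) + ind σ (.ASJob ℓ 0) (.SMach ℓ 0 j t) = 1 := by
    apply ind_add_eq_one _ (by simp)
    simpa [kelig, hb] using hσ (.ASJob ℓ 0)
  have c1 : ind σ (.ASJob ℓ 1) (.AMach ℓ 2) + ind σ (.ASJob ℓ 1) (.SMach ℓ 2 j' t') = 1 := by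
    apply ind_add_eq_one _ (by simp)
    simpa [kelig, hs] using hσ (.ASJob ℓ 1)
  have c2 : ind σ (.ASJob ℓ 2) (.SMach ℓ 2 j' t') + ind σ (.ASJob ℓ 2) (.SMach ℓ 2 j t) = 1 := by
    apply ind_add_eq_one _ (by simpa using h2)
    simpa [kelig, hb, hs] using hσ (.ASJob ℓ 2)
  -- `SMach(ℓ,0,j',t')` has a private load, so no size-2 job fits on it.
  have x0 : ind σ (.SJob ℓ 0 j t) (.SMach ℓ 0 j' t') = 0 := by omega
  -- Besides one job of size 1, only jobs of size 2 are eligible on `SMach(ℓ,1,j,t)`.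
  have x1 : ind σ (.SJob ℓ 0 j' t') (.SMach ℓ 1 j t) = 0 := by omega
  have x2 : ind σ (.ASJob ℓ 0) (.SMach ℓ 0 j t) = ind σ (.ASJob ℓ 1) (.AMach ℓ 2) := by omega
  have x3 : ind σ (.ASJob ℓ 0) (.SMach ℓ 0 j t) = ind σ (prevJob ℓ j t) (.SMach ℓ 0 j t) := by
    have := ind_le_one (σ := σ) (prevJob ℓ j t) (.SMach ℓ 0 j t)
    rcases Nat.eq_zero_or_pos (ind σ (.SJob ℓ 0 j t) (.SMach ℓ 0 j t)) with h | h <;> omega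
  have x4 : ind σ (.SJob ℓ 1 j t) (.SMach ℓ 2 j t) = ind σ (prevJob ℓ j t) (.SMach ℓ 0 j t) := by
    omega
  constructor <;> omega

lemma signal_step (hσ : ∀ J, kelig S B hk J (σ J)) (hl : ∀ M, kload S B σ M = 2)
    (ℓ : Fin B.k) (j : Fin S.n) (t : Fin 4) :
    ind σ (prevJob ℓ j t) (.SMach ℓ 0 j t) =
      ind σ (.SJob ℓ 2 j t) (ksucc S B ℓ 2 j t) := by
  by_cases hb : (j, t) = B.big ℓ
  · exact (signal_exceptional hσ hl hb.symm (j' := (B.small ℓ).1) (t' := (B.small ℓ).2) rfl).1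
  by_cases hs : (j, t) = B.small ℓ
  · exact (signal_exceptional hσ hl (j := (B.big ℓ).1) (t := (B.big ℓ).2) rfl hs.symm).2
  exact signal_generic hσ hl hb hs

/-- The signal of an occurrence is the same before the first sorting step and after every step. -/
lemma signal_all (hσ : ∀ J, kelig S B hk J (σ J)) (hl : ∀ M, kload S B σ M = 2)
    (j : Fin S.n) (t : Fin 4) (a : ℕ) (ha : a < B.k) :
    ind σ (.VJob j t) (.SMach ⟨0, hk⟩ 0 j t) =
      ind σ (.SJob ⟨a, ha⟩ 2 j t) (ksucc S B ⟨a, ha⟩ 2 j t) := by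
  induction a with
  | zero => rw [← signal_step hσ hl]; simp [prevJob]
  | succ a ih =>
    rw [← signal_step hσ hl, ih (by omega)]
    simp [prevJob, ksucc, ha]

/-- The signal that reaches the clause machine of an occurrence is that of its variable job. -/
lemma signal_clause (hσ : ∀ J, kelig S B hk J (σ J)) (hl : ∀ M, kload S B σ M = 2)
    (j : Fin S.n) (t : Fin 4) :
    ind σ (.VJob j t) (.SMach ⟨0, hk⟩ 0 j t) =
      ind σ (.SJob ⟨B.k - 1, by omega⟩ 2 j t) (.CMach (S.occ (j, t)).1 (S.occ (j, t)).2) := by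
  rw [signal_all hσ hl j t (B.k - 1) (by omega)]
  congr 1
  have : ¬ (B.k - 1 + 1 < B.k) := by omega
  simp [ksucc, this]

/-- The truth assignment read off from the schedule: `x_j` is true iff `TJob(j)` is on
`TMach(j,0)`. -/
def assign (σ : KJob S.n S.m B.k → KMach S.n S.m B.k) (j : Fin S.n) : Bool :=
  decide (σ (.TJob j) = .TMach j 0)

/-- A literal occurrence carries a signal iff the literal is true. -/
lemma signal_assign (hσ : ∀ J, kelig S B hk J (σ J)) (hl : ∀ M, kload S B σ M = 2)
    (j : Fin S.n) (t : Fin 4) :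
    ind σ (.VJob j t) (.SMach ⟨0, hk⟩ 0 j t) =
      if assign σ j = decide ((t : ℕ) < 2) then 1 else 0 := by
  have l0 := load_T0 hσ j
  have l1 := load_T1 hσ j
  rw [hl] at l0 l1
  have eT : ind σ (.TJob j) (.TMach j 0) + ind σ (.TJob j) (.TMach j 1) = 1 :=
    ind_add_eq_one (hσ (.TJob j)) (by simp)
  have e0 : ind σ (.VJob j 0) (.TMach j 0) + ind σ (.VJob j 0) (.SMach ⟨0, hk⟩ 0 j 0) = 1 :=
    ind_add_eq_one (hσ (.VJob j 0)) (by simp)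
  have e1 : ind σ (.VJob j 1) (.TMach j 0) + ind σ (.VJob j 1) (.SMach ⟨0, hk⟩ 0 j 1) = 1 :=
    ind_add_eq_one (hσ (.VJob j 1)) (by simp)
  have e2 : ind σ (.VJob j 2) (.TMach j 1) + ind σ (.VJob j 2) (.SMach ⟨0, hk⟩ 0 j 2) = 1 :=
    ind_add_eq_one (hσ (.VJob j 2)) (by simp)
  have e3 : ind σ (.VJob j 3) (.TMach j 1) + ind σ (.VJob j 3) (.SMach ⟨0, hk⟩ 0 j 3) = 1 :=
    ind_add_eq_one (hσ (.VJob j 3)) (by simp)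
  by_cases h : σ (.TJob j) = .TMach j 0
  · have h0 : ind σ (.TJob j) (.TMach j 0) = 1 := if_pos h
    fin_cases t <;> simp [assign, h] <;> omega
  · have h0 : ind σ (.TJob j) (.TMach j 0) = 0 := if_neg h
    fin_cases t <;> simp [assign, h] <;> omega

/-- The literal at position `s` of clause `i` is true iff a signal reaches `CMach(i,s)`. -/
lemma signal_lit (hσ : ∀ J, kelig S B hk J (σ J)) (hl : ∀ M, kload S B σ M = 2)
    (i : Fin (2 * S.m)) (s : Fin 3) :
    ind σ (.SJob ⟨B.k - 1, by omega⟩ 2 (S.occ.symm (i, s)).1 (S.occ.symm (i, s)).2)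
        (.CMach i s) = if assign σ (S.lit i s).1 = (S.lit i s).2 then 1 else 0 := by
  have h1 := signal_clause hσ hl (S.occ.symm (i, s)).1 (S.occ.symm (i, s)).2
  rw [signal_assign hσ hl] at h1
  have h2 := S.occ_spec (S.occ.symm (i, s))
  simp only [Prod.mk.eta, Equiv.apply_symm_apply] at h1 h2
  rw [← h1, h2]

theorem satisfies_of_schedule (hσ : ∀ J, kelig S B hk J (σ J)) (hl : ∀ M, kload S B σ M = 2) :
    S.Satisfies (assign σ) := by
  intro i
  rw [Finset.card_filter]
  simp_rw [← signal_lit hσ hl]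
  have l0 := load_C hσ i 0
  have l1 := load_C hσ i 1
  have l2 := load_C hσ i 2
  rw [hl] at l0 l1 l2
  have e : ∀ r, ind σ (.CJob i r) (.CMach i 0) + ind σ (.CJob i r) (.CMach i 1)
      + ind σ (.CJob i r) (.CMach i 2) = 1 := by
    intro r
    apply ind_add_add_eq_one _ (by simp) (by simp) (by simp)
    simpa [kelig, Fin.exists_fin_succ] using hσ (.CJob i r)
  have e0 := e 0
  have e1 := e 1
  have e2 := e 2
  rw [Fin.sum_univ_three]
  -- The three machines have total load 6, of which the clause jobs take 5 or 4.
  split_ifs at l0 l1 l2 ⊢ <;> omega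

/-! ### From satisfying assignments to 2-schedules -/

/-- A clause with the right number of true literals admits a placement `f` of its clause jobs that
fills up its three machines; `w s` says whether the literal at position `s` is true, and `c` is the
size of the last clause job. -/
lemma exists_clause_placement (w : Fin 3 → Bool) (c : ℕ)
    (h : (c = 2 ∧ (univ.filter (fun s => w s = true)).card = 1) ∨
      (c = 1 ∧ (univ.filter (fun s => w s = true)).card = 2)) :
    ∃ f : Fin 3 → Fin 3, ∀ s, (if w s then 1 else 0) + 2 * (if f 0 = s then 1 else 0)
      + (if f 1 = s then 1 else 0) + c * (if f 2 = s then 1 else 0) = 2 := by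
  rcases h with ⟨rfl, h⟩ | ⟨rfl, h⟩
  · revert w; decide
  · revert w; decide

/-- Truth value of the literal with occurrence `(j,t)`. -/
def litVal (α : Fin S.n → Bool) (j : Fin S.n) (t : Fin 4) : Bool :=
  α j == decide ((t : ℕ) < 2)

/-- The schedule belonging to the assignment `α`: signals start at the true literals, and `f i`
places the jobs of clause `i`. -/
def sched (hk : 0 < B.k) (α : Fin S.n → Bool) (f : Fin (2 * S.m) → Fin 3 → Fin 3) :
    KJob S.n S.m B.k → KMach S.n S.m B.k
  | .TJob j => .TMach j (if α j then 0 else 1)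
  | .VJob j t => if litVal α j t then .SMach ⟨0, hk⟩ 0 j t else .TMach j (half t)
  | .SJob ℓ q j t => if litVal α j t then ksucc S B ℓ q j t else .SMach ℓ q j t
  | .ABJob ℓ q =>
      if litVal α (B.big ℓ).1 (B.big ℓ).2 then .AMach ℓ q.castSucc else .AMach ℓ q.succ
  | .ASJob ℓ q =>
      if litVal α (B.big ℓ).1 (B.big ℓ).2 then
        if q = 0 then .SMach ℓ 0 (B.big ℓ).1 (B.big ℓ).2
        else if q = 1 then .AMach ℓ 2
        else .SMach ℓ 2 (B.small ℓ).1 (B.small ℓ).2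
      else
        if q = 0 then .AMach ℓ 0
        else if q = 1 then .SMach ℓ 2 (B.small ℓ).1 (B.small ℓ).2
        else .SMach ℓ 2 (B.big ℓ).1 (B.big ℓ).2
  | .CJob i r => .CMach i (f i r)
  | .PS ℓ q j t => .SMach ℓ q j t
  | .PA ℓ q => .AMach ℓ q

variable {α : Fin S.n → Bool} {f : Fin (2 * S.m) → Fin 3 → Fin 3}

lemma sched_elig (J : KJob S.n S.m B.k) : kelig S B hk J (sched hk α f J) := by
  rcases J with a | ⟨a, b⟩ | ⟨ℓ, q, j, t⟩ | _ | ⟨ℓ, q⟩ | _ | _ | _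
  · simp only [kelig, sched]; split_ifs <;> simp
  · simp only [kelig, sched, half]; split_ifs <;> simp
  · simp only [kelig, sched]
    rcases eq_or_ne q 0 with rfl | hq
    · by_cases hb : (j, t) = B.big ℓ
      · rw [if_pos ⟨rfl, hb⟩, ← hb, ksucc_zero]
        split_ifs <;> simp
      · by_cases hs : (j, t) = B.small ℓ
        · rw [if_neg (fun h => hb h.2), if_pos ⟨rfl, hs⟩, ← hs, ksucc_zero]
          split_ifs <;> simp
        · rw [if_neg (fun h => hb h.2), if_neg (fun h => hs h.2)]
          split_ifs <;> simp
    · have : (q : ℕ) ≠ 0 := fun h => hq (Fin.ext h)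
      simp only [this, false_and, if_false]
      split_ifs <;> simp
  · simp only [kelig, sched]; split_ifs <;> simp
  · fin_cases q <;> simp only [kelig, sched] <;> split_ifs <;> simp_all
  · simp [kelig, sched]
  · simp [kelig, sched]
  · simp [kelig, sched]

lemma ind_sched_prevJob (ℓ : Fin B.k) (j : Fin S.n) (t : Fin 4) :
    ind (sched hk α f) (prevJob ℓ j t) (.SMach ℓ 0 j t) = if litVal α j t then 1 else 0 := by
  unfold prevJob ind
  split_ifs with h1 h2 h3 h3 <;> simp_all [sched, ksucc]
  all_goals grind

lemma ind_sched_SJob (ℓ : Fin B.k) (q : Fin 3) (j : Fin S.n) (t : Fin 4) :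
    ind (sched hk α f) (.SJob ℓ q j t) (.SMach ℓ q j t) = if litVal α j t then 0 else 1 := by
  have := ksucc_ne (B := B) ℓ q j t
  unfold ind
  cases h : litVal α j t <;> simp [sched, h, this.symm]

lemma ind_sched_SJob_succ (ℓ : Fin B.k) (q : Fin 3) (j : Fin S.n) (t : Fin 4) :
    ind (sched hk α f) (.SJob ℓ q j t) (ksucc S B ℓ q j t) = if litVal α j t then 1 else 0 := by
  have := ksucc_ne (B := B) ℓ q j t
  unfold ind
  cases h : litVal α j t <;> simp [sched, h, this]

lemma ind_sched_SJob_zero (ℓ : Fin B.k) (j : Fin S.n) (t : Fin 4) :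
    ind (sched hk α f) (.SJob ℓ 0 j t) (.SMach ℓ 1 j t) = if litVal α j t then 1 else 0 :=
  ind_sched_SJob_succ ℓ 0 j t

lemma ind_sched_SJob_one (ℓ : Fin B.k) (j : Fin S.n) (t : Fin 4) :
    ind (sched hk α f) (.SJob ℓ 1 j t) (.SMach ℓ 2 j t) = if litVal α j t then 1 else 0 :=
  ind_sched_SJob_succ ℓ 1 j t

/-- The schedule never uses the cross edges between the tracks of different occurrences. -/
lemma ind_sched_cross (ℓ : Fin B.k) (r : Fin 3) (j j' : Fin S.n) (t t' : Fin 4)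
    (h : (j, t) ≠ (j', t')) :
    ind (sched hk α f) (.SJob ℓ 0 j t) (.SMach ℓ r j' t') = 0 := by
  have h1 : ¬ (j = j' ∧ t = t') := by simpa using h
  unfold ind
  cases hv : litVal α j t <;> simp [sched, hv, ksucc_zero] <;> grind

lemma sched_load_SMach (ℓ : Fin B.k) (q : Fin 3) (j : Fin S.n) (t : Fin 4) :
    kload S B (sched hk α f) (.SMach ℓ q j t) = 2 := by
  have hσ := sched_elig (hk := hk) (α := α) (f := f)
  by_cases hb : (j, t) = B.big ℓ
  · have hne := big_ne_small ℓ
    obtain ⟨⟨j', t'⟩, hs⟩ : ∃ p, B.small ℓ = p := ⟨_, rfl⟩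
    rw [← hb, hs] at hne
    match q with
    | 0 =>
      rw [load_S0_big hσ hb.symm, ind_sched_prevJob, ind_sched_SJob]
      cases h : litVal α j t <;> simp [ind, sched, ← hb, h]
    | 1 =>
      rw [load_S1_big hσ hb.symm hs, ind_sched_SJob_zero, ind_sched_SJob,
        ind_sched_cross _ _ _ _ _ _ hne.symm]
      cases h : litVal α j t <;> simp
    | 2 =>
      rw [load_S2_big hσ hb.symm, ind_sched_SJob_one, ind_sched_SJob]
      have h2 : ¬ (j' = j ∧ t' = t) := by grind
      cases h : litVal α j t <;> simp [ind, sched, ← hb, h, hs, h2]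
  by_cases hs : (j, t) = B.small ℓ
  · obtain ⟨⟨j', t'⟩, hb'⟩ : ∃ p, B.big ℓ = p := ⟨_, rfl⟩
    rw [hb'] at hb
    match q with
    | 0 =>
      rw [load_S0_small hσ hb' hs.symm, ind_sched_prevJob, ind_sched_SJob,
        ind_sched_cross _ _ _ _ _ _ (Ne.symm hb)]
      cases h : litVal α j t <;> simp
    | 1 =>
      rw [load_S1 hσ (by rw [hb']; exact hb), ind_sched_SJob_zero, ind_sched_SJob]
      cases h : litVal α j t <;> simp
    | 2 =>
      rw [load_S2_small hσ hs.symm, ind_sched_SJob_one, ind_sched_SJob]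
      have h2 : ¬ (j' = j ∧ t' = t) := by grind
      cases h : litVal α j t <;> cases h' : litVal α j' t' <;>
        simp [ind, sched, hb', ← hs, h', h2]
  match q with
  | 0 =>
    rw [load_S0 hσ hb hs, ind_sched_prevJob, ind_sched_SJob]
    cases h : litVal α j t <;> simp
  | 1 =>
    rw [load_S1 hσ hb, ind_sched_SJob_zero, ind_sched_SJob]
    cases h : litVal α j t <;> simp
  | 2 =>
    rw [load_S2 hσ hb hs, ind_sched_SJob_one, ind_sched_SJob]
    cases h : litVal α j t <;> simp

lemma sched_load_TMach (j : Fin S.n) (q : Fin 2) :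
    kload S B (sched hk α f) (.TMach j q) = 2 := by
  have hσ := sched_elig (hk := hk) (α := α) (f := f)
  match q with
  | 0 => rw [load_T0 hσ]; cases h : α j <;> simp [ind, sched, litVal, h, half]
  | 1 => rw [load_T1 hσ]; cases h : α j <;> simp [ind, sched, litVal, h, half]

lemma sched_load_AMach (ℓ : Fin B.k) (q : Fin 3) :
    kload S B (sched hk α f) (.AMach ℓ q) = 2 := by
  have hσ := sched_elig (hk := hk) (α := α) (f := f)
  match q with
  | 0 => rw [load_A0 hσ]; cases h : litVal α (B.big ℓ).1 (B.big ℓ).2 <;> simp [ind, sched, h]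
  | 1 => rw [load_A1 hσ]; cases h : litVal α (B.big ℓ).1 (B.big ℓ).2 <;> simp [ind, sched, h]
  | 2 => rw [load_A2 hσ]; cases h : litVal α (B.big ℓ).1 (B.big ℓ).2 <;> simp [ind, sched, h]

theorem exists_schedule (hk : 0 < B.k) (hα : S.Satisfies α) :
    ∃ σ : KJob S.n S.m B.k → KMach S.n S.m B.k,
      (∀ J, kelig S B hk J (σ J)) ∧ ∀ M, kload S B σ M = 2 := by
  have hf : ∀ i : Fin (2 * S.m), ∃ f : Fin 3 → Fin 3, ∀ s,
      (if (α (S.lit i s).1 == (S.lit i s).2) then 1 else 0) + 2 * (if f 0 = s then 1 else 0)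
      + (if f 1 = s then 1 else 0)
      + (if (i : ℕ) < S.m then 2 else 1) * (if f 2 = s then 1 else 0) = 2 := by
    intro i
    apply exists_clause_placement
    have := hα i
    split_ifs with h
    · left; simpa [h] using this
    · right; simpa [h] using this
  choose f hf using hf
  refine ⟨sched hk α f, sched_elig, ?_⟩
  rintro (⟨j, q⟩ | ⟨ℓ, q, j, t⟩ | ⟨ℓ, q⟩ | ⟨i, s⟩)
  · exact sched_load_TMach j q
  · exact sched_load_SMach ℓ q j t
  · exact sched_load_AMach ℓ q
  · rw [load_C sched_elig]
    have hsig := ind_sched_SJob_succ (hk := hk) (α := α) (f := f) ⟨B.k - 1, by omega⟩ 2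
      (S.occ.symm (i, s)).1 (S.occ.symm (i, s)).2
    have hlast : ¬ (B.k - 1 + 1 < B.k) := by omega
    have hmach : ksucc S B ⟨B.k - 1, by omega⟩ 2
        (S.occ.symm (i, s)).1 (S.occ.symm (i, s)).2 = .CMach i s := by
      simp [ksucc, hlast]
    rw [hmach] at hsig
    have hlit := S.occ_spec (S.occ.symm (i, s))
    rw [Equiv.apply_symm_apply] at hlit
    have := hf i s
    rw [hlit] at this
    rw [hsig]
    simpa [litVal, ind, sched] using this

end Sched

/-- Lemma 14: the 3-SAT* instance is satisfiable iff the constructed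
rank-3 restricted-assignment instance admits a 2-schedule (every job on an eligible
machine and every machine with load exactly 2). -/
theorem statement19 (hk : 0 < B.k) :
    (∃ α, S.Satisfies α) ↔
      (∃ σ : KJob S.n S.m B.k → KMach S.n S.m B.k,
        (∀ j, kelig S B hk j (σ j)) ∧ ∀ M, kload S B σ M = 2) := by
  constructor
  · rintro ⟨α, hα⟩
    exact Sched.exists_schedule hk hα
  · rintro ⟨σ, hσ, hl⟩
    exact ⟨Sched.assign σ, Sched.satisfies_of_schedule hσ hl⟩
end
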